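/- arXiv:1508.00864 — 10 statements merged into one kernel-verified Lean document; each statement's English description precedes it below -/
import Mathlib

section
/- Let α be a type of states and let δp, δ'p, δe be relations on α and S, S' ⊆ α. Suppose: (1) S' is closed under δ'p ∪ δe, i.e. whenever s ∈ S' and (s,t) ∈ δ'p ∪ δe then t ∈ S'; (2) S' ⊆ S; (3) for all s,t ∈ S', if (s,t) ∈ δ'p then s,t ∈ S and (s,t) ∈ δp; (4) for every s₁, if there exist s₀ ∈ S' with (s₀,s₁) ∈ δe, some s₂ with (s₁,s₂) ∈ δe, and some s₃ with (s₁,s₃) ∈ δp, then there exists s₄ with (s₁,s₄) ∈ δ'p. Then every p'[]₂δe computation (taken with program transitions δ'p) whose initial state lies in S' is a p[]₂δe computation (taken with program transitions δp) whose initial state lies in S. -/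
variable {α : Type*}

/-- A `p[]₂δe` computation: an infinite sequence in which every step is a program
or environment step, and after an environment step the program executes if it can. -/
def Comp2 (δp δe : Set (α × α)) (σ : ℕ → α) : Prop :=
  (∀ i, (σ i, σ (i + 1)) ∈ δp ∪ δe) ∧
  (∀ i, (σ i, σ (i + 1)) ∈ δe → (∃ t, (σ (i + 1), t) ∈ δp) →
    (σ (i + 1), σ (i + 2)) ∈ δp)

theorem stmt0 (δp δ'p δe : Set (α × α)) (S S' : Set α)
    (h1 : ∀ s t, s ∈ S' → (s, t) ∈ δ'p ∪ δe → t ∈ S')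
    (h2 : S' ⊆ S)
    (h3 : ∀ s t, s ∈ S' → t ∈ S' → (s, t) ∈ δ'p → s ∈ S ∧ t ∈ S ∧ (s, t) ∈ δp)
    (h4 : ∀ s₁, (∃ s₀, s₀ ∈ S' ∧ (s₀, s₁) ∈ δe) → (∃ s₂, (s₁, s₂) ∈ δe) →
      (∃ s₃, (s₁, s₃) ∈ δp) → ∃ s₄, (s₁, s₄) ∈ δ'p) :
    ∀ σ : ℕ → α, Comp2 δ'p δe σ → σ 0 ∈ S' → Comp2 δp δe σ ∧ σ 0 ∈ S := by
  intro σ hσ h0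
  obtain ⟨ha, hb⟩ := hσ
  have hS : ∀ i, σ i ∈ S' := by
    intro i
    induction i with
    | zero => exact h0
    | succ k ih => exact h1 _ _ ih (ha k)
  have hp : ∀ i, (σ i, σ (i + 1)) ∈ δ'p → (σ i, σ (i + 1)) ∈ δp :=
    fun i h => (h3 _ _ (hS i) (hS (i + 1)) h).2.2
  refine ⟨⟨fun i => (ha i).imp (hp i) id, ?_⟩, h2 h0⟩
  intro i he ht
  rcases ha (i + 1) with h | h
  · exact hp (i + 1) h
  · exact hp (i + 1) (hb i he (h4 _ ⟨_, hS i, he⟩ ⟨_, h⟩ ht))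
end

section
/- Let α be a type of states and let δp, δ'p, δe be relations on α and S, S' ⊆ α. Suppose that every state s ∈ α has some outgoing transition in δ'p ∪ δe (no deadlocks), and that every p'[]₂δe computation (with program transitions δ'p) whose initial state lies in S' is a p[]₂δe computation (with program transitions δp) whose initial state lies in S. Then S' ⊆ S. -/
variable {α : Type*}

theorem stmt1 (δp δ'p δe : Set (α × α)) (S S' : Set α)
    (hNoDeadlock : ∀ s : α, ∃ t, (s, t) ∈ δ'p ∪ δe)
    (hC1 : ∀ σ : ℕ → α, Comp2 δ'p δe σ → σ 0 ∈ S' → Comp2 δp δe σ ∧ σ 0 ∈ S) :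
    S' ⊆ S := by
  intro s hs
  have h : ∀ s : α, ∃ t, (s, t) ∈ δ'p ∪ δe ∧ ((∃ u, (s, u) ∈ δ'p) → (s, t) ∈ δ'p) := by
    intro s
    by_cases hp : ∃ u, (s, u) ∈ δ'p
    · obtain ⟨u, hu⟩ := hp
      exact ⟨u, Or.inl hu, fun _ => hu⟩
    · obtain ⟨t, ht⟩ := hNoDeadlock s
      exact ⟨t, ht, fun h => absurd h hp⟩
  choose f hf hg using h
  let σ : ℕ → α := fun n => Nat.rec s (fun _ x => f x) n
  exact (hC1 σ ⟨fun i => hf (σ i), fun i _ hu => hg (σ (i + 1)) hu⟩ hs).2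
end

section
/- Let δe, δb be relations on a type α and let R ⊆ α satisfy the termination property for δe, δb. Let δ''p be any relation on α with δ''p ∩ δb = ∅ and δ''p ∩ δe = ∅. Let s₀,…,s_n be a p''[]₂δe prefix (with program transitions δ''p) with s_n ∉ R ∪ Rp(R). Then at least one of the following holds: (a) s_n has no outgoing transition in δ''p ∪ δe; (b) there exists s_{n+1} ∉ R ∪ Rp(R) such that s₀,…,s_n,s_{n+1} is a p''[]₂δe prefix; (c) there exist s_{n+1} ∈ Rp(R) \ R and s_{n+2} ∉ R ∪ Rp(R) such that s₀,…,s_n,s_{n+1},s_{n+2} is a p''[]₂δe prefix. -/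
variable {α : Type*}

/-- `Rp δb R` is the set of states outside `R` from which some state of `R`
can be reached by a transition not in `δb`. -/
def Rp (δb : Set (α × α)) (R : Set α) : Set α :=
  {s | s ∉ R ∧ ∃ t ∈ R, (s, t) ∉ δb}

/-- The termination property of the fixed-point set `R`. -/
def TermProp (δe δb : Set (α × α)) (R : Set α) : Prop :=
  ∀ s ∉ R, (∃ u, u ∉ R ∪ Rp δb R ∧ (s, u) ∈ δe) ∨
    ((¬ ∃ t ∈ R ∪ Rp δb R, (s, t) ∈ δe) ∧ s ∉ Rp δb R)

/-- `Prefix2 δp δe σ n`: the finite sequence `σ 0, …, σ n` is a `p[]₂δe` prefix. -/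
def Prefix2 (δp δe : Set (α × α)) (σ : ℕ → α) (n : ℕ) : Prop :=
  (∀ i < n, (σ i, σ (i + 1)) ∈ δp ∪ δe) ∧
  (∀ i, i + 2 ≤ n → (σ i, σ (i + 1)) ∈ δe → (∃ t, (σ (i + 1), t) ∈ δp) →
    (σ (i + 1), σ (i + 2)) ∈ δp)

theorem prefix2_extend (δp δe : Set (α × α)) (σ : ℕ → α) (n : ℕ) (x : α)
    (h : Prefix2 δp δe σ n) (hx : (σ n, x) ∈ δp ∪ δe)
    (hc : ∀ i, i + 1 = n → (σ i, σ n) ∈ δe → (∃ t, (σ n, t) ∈ δp) → (σ n, x) ∈ δp) :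
    Prefix2 δp δe (fun i => if i ≤ n then σ i else x) (n + 1) := by
  refine ⟨fun i hi => ?_, fun i hi => ?_⟩
  · by_cases h1 : i = n
    · subst h1; simpa using hx
    · have a : i ≤ n := by omega
      have b : i + 1 ≤ n := by omega
      simp only [a, b, if_true]
      exact h.1 i (by omega)
  · have a : i ≤ n := by omega
    have b : i + 1 ≤ n := by omega
    simp only [a, b, if_true]
    by_cases h1 : i + 1 = n
    · have c : ¬ i + 2 ≤ n := by omega
      simp only [c, if_false]
      intro p q
      have := hc i h1
      rw [← h1] at this
      exact this p q
    · have c : i + 2 ≤ n := by omega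
      simp only [c, if_true]
      exact h.2 i c

theorem stmt3 (δe δb δ''p : Set (α × α)) (R : Set α)
    (hR : TermProp δe δb R)
    (hb : δ''p ∩ δb = ∅) (he : δ''p ∩ δe = ∅)
    (σ : ℕ → α) (n : ℕ) (hpre : Prefix2 δ''p δe σ n)
    (hn : σ n ∉ R ∪ Rp δb R) :
    (¬ ∃ u, (σ n, u) ∈ δ''p ∪ δe) ∨
    (∃ σ' : ℕ → α, (∀ i ≤ n, σ' i = σ i) ∧ Prefix2 δ''p δe σ' (n + 1) ∧
      σ' (n + 1) ∉ R ∪ Rp δb R) ∨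
    (∃ σ' : ℕ → α, (∀ i ≤ n, σ' i = σ i) ∧ Prefix2 δ''p δe σ' (n + 2) ∧
      σ' (n + 1) ∈ Rp δb R \ R ∧ σ' (n + 2) ∉ R ∪ Rp δb R) := by
  by_cases hp : ∃ t, (σ n, t) ∈ δ''p
  · obtain ⟨t, ht⟩ := hp
    have htb : (σ n, t) ∉ δb := fun h => by
      have : (σ n, t) ∈ δ''p ∩ δb := ⟨ht, h⟩
      simp [hb] at this
    have hte : (σ n, t) ∉ δe := fun h => by
      have : (σ n, t) ∈ δ''p ∩ δe := ⟨ht, h⟩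
      simp [he] at this
    have htR : t ∉ R := fun h => hn (Or.inr ⟨fun h' => hn (Or.inl h'), t, h, htb⟩)
    have h1 := prefix2_extend δ''p δe σ n t hpre (Or.inl ht) (fun _ _ _ _ => ht)
    by_cases htp : t ∈ Rp δb R
    · rcases hR t htR with ⟨u, hu, hue⟩ | ⟨_, h⟩
      · right; right
        have h2 := prefix2_extend δ''p δe _ (n + 1) u h1 (by simpa using Or.inr hue) (by
          intro i hi hie
          obtain rfl : i = n := by omega
          simp at hie
          exact absurd hie hte)
        refine ⟨_, ?_, h2, ?_, ?_⟩
        · intro i hi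
          have : i ≤ n + 1 := by omega
          simp [hi, this]
        · simpa using ⟨htp, htR⟩
        · simpa using hu
      · exact absurd htp h
    · right; left
      refine ⟨_, ?_, h1, ?_⟩
      · intro i hi
        simp [hi]
      · simpa using ⟨htR, htp⟩
  · by_cases hx : ∃ u, (σ n, u) ∈ δ''p ∪ δe
    · right; left
      have key : ∃ u, u ∉ R ∪ Rp δb R ∧ (σ n, u) ∈ δe := by
        rcases hR (σ n) (fun h => hn (Or.inl h)) with h | ⟨h, _⟩
        · exact h
        · obtain ⟨u, hu | hu⟩ := hx
          · exact absurd ⟨u, hu⟩ hp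
          · exact ⟨u, fun h' => h ⟨u, h', hu⟩, hu⟩
      obtain ⟨u, hu, hue⟩ := key
      refine ⟨_, ?_, prefix2_extend δ''p δe σ n u hpre (Or.inr hue)
        (fun _ _ _ h => absurd h hp), ?_⟩
      · intro i hi
        simp [hi]
      · simpa using hu
    · exact Or.inl hx
end

section
/- Let δe, δb be relations on a type α and let R ⊆ α satisfy the termination property for δe, δb. Let δ''p be any relation on α with δ''p ∩ δb = ∅ and δ''p ∩ δe = ∅. Let s₀,…,s_n be a p''[]₂δe prefix with s_n ∉ R ∪ Rp(R). Then either (a) there exists an infinite p''[]₂δe computation σ with σ i = s_i for all i ≤ n and σ i ∉ R for all i ≥ n, or (b) the prefix extends to a p''[]₂δe prefix s₀,…,s_m with m ≥ n, s_i ∉ R for all n ≤ i ≤ m, whose final state s_m has no outgoing transition in δ''p ∪ δe. -/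
variable {α : Type*}

theorem stmt4 (δe δb δ''p : Set (α × α)) (R : Set α)
    (hR : TermProp δe δb R)
    (hb : δ''p ∩ δb = ∅) (he : δ''p ∩ δe = ∅)
    (σ : ℕ → α) (n : ℕ) (hpre : Prefix2 δ''p δe σ n)
    (hn : σ n ∉ R ∪ Rp δb R) :
    (∃ σ' : ℕ → α, (∀ i ≤ n, σ' i = σ i) ∧ Comp2 δ''p δe σ' ∧
      ∀ i, n ≤ i → σ' i ∉ R) ∨
    (∃ m, n ≤ m ∧ ∃ σ' : ℕ → α, (∀ i ≤ n, σ' i = σ i) ∧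
      Prefix2 δ''p δe σ' m ∧ (∀ i, n ≤ i → i ≤ m → σ' i ∉ R) ∧
      ¬ ∃ u, (σ' m, u) ∈ δ''p ∪ δe) := by
  have hbad : ∀ s t, (s, t) ∈ δ''p → (s, t) ∉ δb := fun s t h h' =>
    (Set.eq_empty_iff_forall_notMem.mp hb (s, t)) ⟨h, h'⟩
  have henv : ∀ s t, (s, t) ∈ δ''p → (s, t) ∉ δe := fun s t h h' =>
    (Set.eq_empty_iff_forall_notMem.mp he (s, t)) ⟨h, h'⟩
  have hf : ∀ s, ∃ t, s ∉ R → (∃ u, (s, u) ∈ δ''p ∪ δe) →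
      t ∉ R ∧ (s, t) ∈ δ''p ∪ δe ∧ (s ∉ Rp δb R → (∃ u, (s, u) ∈ δ''p) → (s, t) ∈ δ''p) ∧
      (t ∈ Rp δb R → (s, t) ∈ δ''p) := by
    intro s
    by_cases hs : s ∉ R ∧ ∃ u, (s, u) ∈ δ''p ∪ δe
    swap
    · exact ⟨s, fun h1 h2 => absurd ⟨h1, h2⟩ hs⟩
    obtain ⟨hsR, v, hv⟩ := hs
    by_cases hp : s ∉ Rp δb R ∧ ∃ u, (s, u) ∈ δ''p
    · obtain ⟨h1, u, hu⟩ := hp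
      exact ⟨u, fun _ _ => ⟨fun hR' => h1 ⟨hsR, u, hR', hbad _ _ hu⟩, Or.inl hu,
        fun _ _ => hu, fun _ => hu⟩⟩
    · have key : ∃ u, u ∉ R ∪ Rp δb R ∧ (s, u) ∈ δe := by
        rcases hR s hsR with h | ⟨h1, h2⟩
        · exact h
        · have hve : (s, v) ∈ δe := by
            rcases hv with hv | hv
            · exact absurd ⟨h2, v, hv⟩ hp
            · exact hv
          exact ⟨v, fun h => h1 ⟨v, h, hve⟩, hve⟩
      obtain ⟨u, hu, hue⟩ := key
      exact ⟨u, fun _ _ => ⟨fun h => hu (Or.inl h), Or.inr hue,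
        fun h1 h2 => absurd ⟨h1, h2⟩ hp, fun h => absurd (Or.inr h) hu⟩⟩
  choose f hf using hf
  obtain ⟨τ, hτ0, hτ1⟩ : ∃ τ : ℕ → α, (∀ i ≤ n, τ i = σ i) ∧
      ∀ i, n ≤ i → τ (i + 1) = f (τ i) := by
    refine ⟨fun i => if i ≤ n then σ i else f^[i - n] (σ n), fun i hi => by simp [hi], ?_⟩
    intro i hi
    have h1 : ¬ (i + 1 ≤ n) := by omega
    have h2 : i + 1 - n = (i - n) + 1 := by omega
    simp only [h1, if_false, h2, Function.iterate_succ_apply']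
    by_cases h : i ≤ n
    · obtain rfl : i = n := le_antisymm h hi
      simp
    · simp [h]
  have hnR : σ n ∉ R := fun h => hn (Or.inl h)
  have hnRp : σ n ∉ Rp δb R := fun h => hn (Or.inr h)
  have main : ∀ m, (∀ j, n ≤ j → j < m → ∃ u, (τ j, u) ∈ δ''p ∪ δe) →
      Prefix2 δ''p δe τ m ∧ (∀ i, n ≤ i → i ≤ m → τ i ∉ R) := by
    intro m hm
    have hnot : ∀ i, n ≤ i → i ≤ m → τ i ∉ R := by
      intro i hi
      induction i, hi using Nat.le_induction with
      | base => intro _; rw [hτ0 n le_rfl]; exact hnR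
      | succ k hk ih =>
        intro hkm
        rw [hτ1 k hk]
        exact (hf _ (ih (by omega)) (hm k hk (by omega))).1
    have step : ∀ i, n ≤ i → i < m → _ := fun i hi him =>
      hf (τ i) (hnot i hi him.le) (hm i hi him)
    refine ⟨⟨?_, ?_⟩, hnot⟩
    · intro i hi
      by_cases h : n ≤ i
      · rw [hτ1 i h]; exact (step i h hi).2.1
      · rw [hτ0 i (by omega), hτ0 (i+1) (by omega)]
        exact hpre.1 i (by omega)
    · intro i hi hie hp
      by_cases h : n ≤ i + 1
      · have hnp : τ (i + 1) ∉ Rp δb R := by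
          by_cases h' : n ≤ i
          · intro hc
            rw [hτ1 i h'] at hc hie
            exact henv _ _ ((step i h' (by omega)).2.2.2 hc) hie
          · have : i + 1 = n := by omega
            rw [this, hτ0 n le_rfl]; exact hnRp
        have := (step (i+1) h (by omega)).2.2.1 hnp hp
        rwa [← hτ1 (i+1) h] at this
      · rw [hτ0 i (by omega), hτ0 (i+1) (by omega)] at hie
        rw [hτ0 (i+1) (by omega)] at hp ⊢
        rw [hτ0 (i+2) (by omega)]
        exact hpre.2 i (by omega) hie hp
  classical
  by_cases hlive : ∀ j, n ≤ j → ∃ u, (τ j, u) ∈ δ''p ∪ δe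
  · left
    have M := fun m => main m (fun j hj _ => hlive j hj)
    exact ⟨τ, hτ0, ⟨fun i => (M (i+1)).1.1 i (by omega),
      fun i => (M (i+2)).1.2 i le_rfl⟩, fun i hi => (M i).2 i hi le_rfl⟩
  · right
    have hex : ∃ j, n ≤ j ∧ ¬ ∃ u, (τ j, u) ∈ δ''p ∪ δe := by
      by_contra hc
      exact hlive fun j hj => by
        by_contra h
        exact hc ⟨j, hj, h⟩
    obtain ⟨h1, h2⟩ := Nat.find_spec hex
    have M := main (Nat.find hex) (fun j hj hlt => by
      by_contra h
      exact Nat.find_min hex hlt ⟨hj, h⟩)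
    exact ⟨Nat.find hex, h1, τ, hτ0, M.1, M.2, h2⟩
end

section
/- Let δe, δb be relations on a type α, let S ⊆ R ⊆ α, and suppose R satisfies the termination property for δe, δb. Let δ''p be any relation on α with δ''p ∩ δb = ∅ and δ''p ∩ δe = ∅, and suppose every state of α has an outgoing transition in δ''p ∪ δe. Then for every s₀ ∉ R there exists an infinite p''[]₂δe computation σ with σ 0 = s₀ such that σ i ∉ S for all i. -/
variable {α : Type*}

theorem stmt5 (δe δb δ''p : Set (α × α)) (S R : Set α)
    (hSR : S ⊆ R) (hR : TermProp δe δb R)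
    (hb : δ''p ∩ δb = ∅) (he : δ''p ∩ δe = ∅)
    (hNoDeadlock : ∀ s : α, ∃ t, (s, t) ∈ δ''p ∪ δe) :
    ∀ s₀ ∉ R, ∃ σ : ℕ → α, σ 0 = s₀ ∧ Comp2 δ''p δe σ ∧ ∀ i, σ i ∉ S := by
  have hpb : ∀ s t, (s, t) ∈ δ''p → (s, t) ∉ δb := fun s t h h' => by
    have : (s, t) ∈ δ''p ∩ δb := ⟨h, h'⟩
    simp [hb] at this
  have hpe : ∀ s t, (s, t) ∈ δ''p → (s, t) ∉ δe := fun s t h h' => by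
    have : (s, t) ∈ δ''p ∩ δe := ⟨h, h'⟩
    simp [he] at this
  have hp : ∀ s t, s ∉ R → s ∉ Rp δb R → (s, t) ∈ δ''p → t ∉ R :=
    fun s t h1 h2 h3 h4 => h2 ⟨h1, t, h4, hpb s t h3⟩
  have step : ∀ x : {x : α × Prop // x.1 ∉ R ∧ (x.2 → x.1 ∉ Rp δb R)},
      ∃ y : {x : α × Prop // x.1 ∉ R ∧ (x.2 → x.1 ∉ Rp δb R)},
        (x.1.1, y.1.1) ∈ δ''p ∪ δe ∧ ((x.1.1, y.1.1) ∈ δe → y.1.2) ∧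
        (x.1.2 → (∃ t, (x.1.1, t) ∈ δ''p) → (x.1.1, y.1.1) ∈ δ''p) := by
    rintro ⟨⟨s, f⟩, h1, h2⟩
    simp only at h1 h2
    by_cases hf : f ∧ ∃ t, (s, t) ∈ δ''p
    · obtain ⟨hf, t, ht⟩ := hf
      exact ⟨⟨(t, False), hp s t h1 (h2 hf) ht, fun h => h.elim⟩, Or.inl ht,
        fun h => (hpe s t ht h).elim, fun _ _ => ht⟩
    · rcases hR s h1 with ⟨u, hu, hsu⟩ | ⟨h3, h4⟩
      · exact ⟨⟨(u, True), fun h => hu (Or.inl h), fun _ h => hu (Or.inr h)⟩, Or.inr hsu,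
          fun _ => trivial, fun a b => (hf ⟨a, b⟩).elim⟩
      · obtain ⟨t, ht | ht⟩ := hNoDeadlock s
        · exact ⟨⟨(t, False), hp s t h1 h4 ht, fun h => h.elim⟩, Or.inl ht,
            fun h => (hpe s t ht h).elim, fun _ _ => ht⟩
        · exact ⟨⟨(t, True), fun h => h3 ⟨t, Or.inl h, ht⟩, fun _ h => h3 ⟨t, Or.inr h, ht⟩⟩,
            Or.inr ht, fun _ => trivial, fun a b => (hf ⟨a, b⟩).elim⟩
  choose g hg1 hg2 hg3 using step
  intro s₀ hs₀
  let τ : ℕ → {x : α × Prop // x.1 ∉ R ∧ (x.2 → x.1 ∉ Rp δb R)} :=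
    fun n => Nat.rec ⟨(s₀, False), hs₀, fun h => h.elim⟩ (fun _ x => g x) n
  exact ⟨fun n => (τ n).1.1, rfl, ⟨fun i => hg1 (τ i),
    fun i h h' => hg3 (τ (i + 1)) (hg2 (τ i) h) h'⟩, fun i h => (τ i).2.1 (hSR h)⟩
end

section
/- Let δe, δb be relations on a type α, let S ⊆ R ⊆ α with R ≠ α (there is some state outside R), and suppose R satisfies the termination property for δe, δb. Then there is no relation δ''p on α such that δ''p ∩ δb = ∅, δ''p ∩ δe = ∅, every state of α has an outgoing transition in δ''p ∪ δe, and every infinite p''[]₂δe computation contains a state in S. -/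
variable {α : Type*}

theorem stmt6 (δe δb : Set (α × α)) (S R : Set α)
    (hSR : S ⊆ R) (hRne : ∃ s, s ∉ R) (hR : TermProp δe δb R) :
    ¬ ∃ δ''p : Set (α × α), δ''p ∩ δb = ∅ ∧ δ''p ∩ δe = ∅ ∧
      (∀ s : α, ∃ t, (s, t) ∈ δ''p ∪ δe) ∧
      (∀ σ : ℕ → α, Comp2 δ''p δe σ → ∃ i, σ i ∈ S) := by
  rintro ⟨δp, hb, he, htot, hσ⟩
  have hb' : ∀ x, x ∈ δp → x ∉ δb := fun x h1 h2 => by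
    have : x ∈ δp ∩ δb := ⟨h1, h2⟩
    simp [hb] at this
  have he' : ∀ x, x ∈ δp → x ∉ δe := fun x h1 h2 => by
    have : x ∈ δp ∩ δe := ⟨h1, h2⟩
    simp [he] at this
  let P : α × Prop → Prop := fun x => x.1 ∉ R ∧ (x.2 → x.1 ∉ Rp δb R)
  have hp : ∀ s t, s ∉ R → s ∉ Rp δb R → (s, t) ∈ δp → t ∉ R :=
    fun s t h1 h2 h3 h4 => h2 ⟨h1, t, h4, hb' _ h3⟩
  have step : ∀ x : {x // P x}, ∃ y : {y // P y},
      (((x.1.1, y.1.1) ∈ δp) ∨ ((x.1.1, y.1.1) ∈ δe ∧ y.1.2)) ∧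
      (x.1.2 → (∃ t, (x.1.1, t) ∈ δp) → (x.1.1, y.1.1) ∈ δp) := by
    rintro ⟨⟨s, b⟩, hs, hb1⟩
    dsimp only at hs hb1 ⊢
    by_cases hc : b ∧ ∃ t, (s, t) ∈ δp
    · obtain ⟨h1, t, ht⟩ := hc
      exact ⟨⟨(t, False), hp s t hs (hb1 h1) ht, fun h => h.elim⟩, Or.inl ht, fun _ _ => ht⟩
    · rcases hR s hs with ⟨u, hu, hsu⟩ | ⟨h1, h2⟩
      · exact ⟨⟨(u, True), fun h => hu (Or.inl h), fun _ h => hu (Or.inr h)⟩,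
          Or.inr ⟨hsu, trivial⟩, fun h h' => (hc ⟨h, h'⟩).elim⟩
      · obtain ⟨t, ht | ht⟩ := htot s
        · exact ⟨⟨(t, False), hp s t hs h2 ht, fun h => h.elim⟩, Or.inl ht, fun _ _ => ht⟩
        · exact ⟨⟨(t, True), fun h => h1 ⟨t, Or.inl h, ht⟩, fun _ h => h1 ⟨t, Or.inr h, ht⟩⟩,
            Or.inr ⟨ht, trivial⟩, fun h h' => (hc ⟨h, h'⟩).elim⟩
  choose f hf1 hf2 using step
  obtain ⟨s0, hs0⟩ := hRne
  let τ : ℕ → {x // P x} := fun n => Nat.rec ⟨(s0, False), hs0, fun h => h.elim⟩ (fun _ x => f x) n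
  obtain ⟨i, hi⟩ := hσ (fun n => (τ n).1.1) ⟨fun i => (hf1 (τ i)).imp id And.left, fun i h1 h2 => by
    rcases hf1 (τ i) with h | ⟨_, h⟩
    · exact (he' _ h h1).elim
    · exact hf2 (τ (i + 1)) h h2⟩
  exact (τ i).2.1 (hSR hi)
end

section
/- Let δb be a relation on a type α and Rank : α → ℕ∞ a function such that for all s, t, if (s,t) ∉ δb then Rank s ≤ Rank t + 1. Let δ''p be a relation on α with δ''p ∩ δb = ∅. Let σ : ℕ → α be a sequence and j an index such that (σ l, σ (l+1)) ∈ δ''p for all l ≥ j, and suppose Rank (σ j) = m where m is finite and m ≥ 1. Then either there exists i > j with Rank (σ i) = m − 1, or Rank (σ i) ≥ m for all i ≥ j. -/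
variable {α : Type*}

theorem stmt9 (δb δ''p : Set (α × α)) (Rank : α → ℕ∞)
    (hRank : ∀ s t, (s, t) ∉ δb → Rank s ≤ Rank t + 1)
    (hb : δ''p ∩ δb = ∅)
    (σ : ℕ → α) (j : ℕ) (hstep : ∀ l, j ≤ l → (σ l, σ (l + 1)) ∈ δ''p)
    (m : ℕ) (hm : 1 ≤ m) (hj : Rank (σ j) = (m : ℕ∞)) :
    (∃ i, j < i ∧ Rank (σ i) = ((m - 1 : ℕ) : ℕ∞)) ∨
    (∀ i, j ≤ i → (m : ℕ∞) ≤ Rank (σ i)) := by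
  by_contra hcon
  rw [not_or] at hcon
  obtain ⟨h1, h2⟩ := hcon
  apply h2
  intro i hi
  induction i, hi using Nat.le_induction with
  | base => exact hj.ge
  | succ l hl ih =>
    have hnb : (σ l, σ (l + 1)) ∉ δb := fun h => by
      have : (σ l, σ (l + 1)) ∈ δ''p ∩ δb := ⟨hstep l hl, h⟩
      rw [hb] at this
      exact this
    have h3 := ih.trans (hRank _ _ hnb)
    have h4 : Rank (σ (l + 1)) ≠ ((m - 1 : ℕ) : ℕ∞) := fun h => h1 ⟨l + 1, by omega, h⟩
    generalize Rank (σ (l + 1)) = r at h3 h4 ⊢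
    induction r using ENat.recTopCoe with
    | top => exact le_top
    | coe r =>
      have h5 : m ≤ r + 1 := by exact_mod_cast h3
      have h6 : r ≠ m - 1 := fun h => h4 (by rw [h])
      have h7 : m ≤ r := by omega
      exact_mod_cast h7
end

section
/- Let δe, δb, δr, f be relations on a type α and (ms₁, ms₂) the least pair of subsets of α closed under rules (R1)–(R6). Let δ''p be a relation on α with δ''p ∩ δb = ∅, δ''p ∩ δr = ∅, δ''p ∩ δe = ∅, and f ∩ δe = ∅. Then every p''[]₂δe[]f prefix whose final state lies in ms₁ can be extended (by appending finitely many states) to a p''[]₂δe[]f prefix that contains some step (s_i, s_{i+1}) ∈ δb. -/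
variable {α : Type*}

/-- The closure rules (R1)–(R6) computed by the failsafe fault-tolerance
addition algorithm, for a pair of sets `(ms₁, ms₂)`. -/
def ClosedMS (δe δb δr f : Set (α × α)) (ms₁ ms₂ : Set α) : Prop :=
  -- (R1)
  (∀ s t, (s, t) ∈ f → (s, t) ∈ δb → s ∈ ms₁) ∧
  -- (R2)
  (ms₁ ⊆ ms₂) ∧
  -- (R3)
  (∀ s t, (s, t) ∈ δe → (s, t) ∈ δb → s ∈ ms₂) ∧
  -- (R4)
  (∀ s t, (s, t) ∈ f → t ∈ ms₂ → s ∈ ms₁) ∧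
  -- (R5)
  (∀ s, (∃ t, ((s, t) ∈ δe ∧ t ∈ ms₁) ∨ ((s, t) ∈ δe ∧ (s, t) ∈ δb)) →
    (∀ u, (s, u) ∈ δb ∨ (s, u) ∈ δr ∨ u ∈ ms₂) → s ∈ ms₁) ∧
  -- (R6)
  (∀ s t, (s, t) ∈ δe → t ∈ ms₁ → s ∈ ms₂)

/-- `(ms₁, ms₂)` is the least pair of sets closed under rules (R1)–(R6). -/
def LeastMS (δe δb δr f : Set (α × α)) (ms₁ ms₂ : Set α) : Prop :=
  ClosedMS δe δb δr f ms₁ ms₂ ∧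
  ∀ ms₁' ms₂', ClosedMS δe δb δr f ms₁' ms₂' → ms₁ ⊆ ms₁' ∧ ms₂ ⊆ ms₂'

/-- `PrefixF δp δe f σ n`: the finite sequence `σ 0, …, σ n` is a `p[]₂δe[]f` prefix. -/
def PrefixF (δp δe f : Set (α × α)) (σ : ℕ → α) (n : ℕ) : Prop :=
  (∀ i < n, (σ i, σ (i + 1)) ∈ δp ∪ δe ∪ f) ∧
  (∀ i, i + 2 ≤ n → (σ i, σ (i + 1)) ∈ δe → (∃ t, (σ (i + 1), t) ∈ δp) →
    (σ (i + 1), σ (i + 2)) ∈ δp ∪ f)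

def Free13 (δp δe : Set (α × α)) (σ : ℕ → α) (n : ℕ) : Prop :=
  ∀ k, k + 1 = n → (σ k, σ n) ∈ δe → ¬ ∃ t, (σ n, t) ∈ δp

def Ext13 (δp δe δb f : Set (α × α)) (σ : ℕ → α) (n : ℕ) : Prop :=
  ∃ (σ' : ℕ → α) (m : ℕ), n ≤ m ∧ (∀ i ≤ n, σ' i = σ i) ∧
        PrefixF δp δe f σ' m ∧ ∃ i < m, (σ' i, σ' (i + 1)) ∈ δb

theorem step13 (δp δe f : Set (α × α)) (σ : ℕ → α) (n : ℕ) (t : α)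
    (h : PrefixF δp δe f σ n) (hs : (σ n, t) ∈ δp ∪ δe ∪ f)
    (hf : (σ n, t) ∈ δp ∪ f ∨ Free13 δp δe σ n) :
    PrefixF δp δe f (fun i => if i ≤ n then σ i else t) (n + 1) := by
  obtain ⟨h1, h2⟩ := h
  constructor
  · intro i hi
    rcases Nat.lt_or_ge i n with h | h
    · have a : i ≤ n := by omega
      have b : i + 1 ≤ n := by omega
      simp only [a, b, if_true]
      exact h1 i h
    · obtain rfl : i = n := by omega
      simpa using hs
  · intro i hi
    rcases Nat.lt_or_ge (i + 1) n with h | h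
    · have a : i ≤ n := by omega
      have b : i + 1 ≤ n := by omega
      have c : i + 2 ≤ n := by omega
      simp only [a, b, c, if_true]
      exact h2 i c
    · obtain rfl : n = i + 1 := by omega
      have a : i ≤ i + 1 := by omega
      have c : ¬ (i + 2 ≤ i + 1) := by omega
      simp only [a, c, le_refl, if_true, if_false]
      intro he ht
      rcases hf with hf | hf
      · exact hf
      · exact absurd ht (hf i rfl he)

theorem ext_bad13 (δp δe δb f : Set (α × α)) (σ : ℕ → α) (n : ℕ) (t : α)
    (h : PrefixF δp δe f σ n) (hs : (σ n, t) ∈ δp ∪ δe ∪ f)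
    (hf : (σ n, t) ∈ δp ∪ f ∨ Free13 δp δe σ n) (hb : (σ n, t) ∈ δb) :
    Ext13 δp δe δb f σ n :=
  ⟨_, n + 1, by omega, fun i hi => by simp [hi], step13 δp δe f σ n t h hs hf, n, by omega,
    by simpa using hb⟩

theorem ext_step13 (δp δe δb f : Set (α × α)) (σ : ℕ → α) (n : ℕ) (t : α)
    (h : PrefixF δp δe f σ n) (hs : (σ n, t) ∈ δp ∪ δe ∪ f)
    (hf : (σ n, t) ∈ δp ∪ f ∨ Free13 δp δe σ n)
    (hg : ∀ τ m, PrefixF δp δe f τ m → τ m = t → ((σ n, t) ∉ δe → Free13 δp δe τ m) →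
      Ext13 δp δe δb f τ m) :
    Ext13 δp δe δb f σ n := by
  obtain ⟨σ', m, h1, h2, h3, h4⟩ := hg _ _ (step13 δp δe f σ n t h hs hf) (by simp) (by
    intro hn k hk he
    obtain rfl : k = n := by omega
    simp at he
    exact absurd he hn)
  refine ⟨σ', m, by omega, fun i hi => ?_, h3, h4⟩
  rw [h2 i (by omega)]
  simp [hi]

theorem stmt13 (δe δb δr f δ''p : Set (α × α)) (ms₁ ms₂ : Set α)
    (hms : LeastMS δe δb δr f ms₁ ms₂)
    (hpb : δ''p ∩ δb = ∅) (hpr : δ''p ∩ δr = ∅)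
    (hpe : δ''p ∩ δe = ∅) (hfe : f ∩ δe = ∅) :
    ∀ (σ : ℕ → α) (n : ℕ), PrefixF δ''p δe f σ n → σ n ∈ ms₁ →
      ∃ (σ' : ℕ → α) (m : ℕ), n ≤ m ∧ (∀ i ≤ n, σ' i = σ i) ∧
        PrefixF δ''p δe f σ' m ∧ ∃ i < m, (σ' i, σ' (i + 1)) ∈ δb := by
  have dis : ∀ {A B : Set (α × α)}, A ∩ B = ∅ → ∀ x, x ∈ A → x ∉ B := by
    intro A B h x ha hb
    have : x ∈ A ∩ B := ⟨ha, hb⟩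
    simp [h] at this
  have key := (hms.2
    {s | ∀ τ m, PrefixF δ''p δe f τ m → τ m = s → Ext13 δ''p δe δb f τ m}
    {s | ∀ τ m, PrefixF δ''p δe f τ m → τ m = s → Free13 δ''p δe τ m →
      Ext13 δ''p δe δb f τ m} ?_).1
  · intro σ n h hm
    exact key hm σ n h rfl
  refine ⟨?_, ?_, ?_, ?_, ?_, ?_⟩
  · rintro s t hf hb τ m h rfl
    exact ext_bad13 _ _ _ _ _ _ t h (Or.inr hf) (Or.inl (Or.inr hf)) hb
  · intro s hs τ m h e _
    exact hs τ m h e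
  · rintro s t he hb τ m h rfl hfr
    exact ext_bad13 _ _ _ _ _ _ t h (Or.inl (Or.inr he)) (Or.inr hfr) hb
  · rintro s t hf ht τ m h rfl
    exact ext_step13 _ _ _ _ _ _ t h (Or.inr hf) (Or.inl (Or.inr hf))
      fun τ' m' h' e' hfr => ht τ' m' h' e' (hfr (dis hfe _ hf))
  · rintro s ⟨t, ht⟩ hu τ m h rfl
    by_cases hp : ∃ u, (τ m, u) ∈ δ''p
    · obtain ⟨u, hp⟩ := hp
      rcases hu u with hb | hr | hu
      · exact absurd hb (dis hpb _ hp)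
      · exact absurd hr (dis hpr _ hp)
      · exact ext_step13 _ _ _ _ _ _ u h (Or.inl (Or.inl hp)) (Or.inl (Or.inl hp))
          fun τ' m' h' e' hfr => hu τ' m' h' e' (hfr (dis hpe _ hp))
    · have hfr : Free13 δ''p δe τ m := fun _ _ _ => hp
      rcases ht with ⟨he, ht⟩ | ⟨he, hb⟩
      · exact ext_step13 _ _ _ _ _ _ t h (Or.inl (Or.inr he)) (Or.inr hfr)
          fun τ' m' h' e' _ => ht τ' m' h' e'
      · exact ext_bad13 _ _ _ _ _ _ t h (Or.inl (Or.inr he)) (Or.inr hfr) hb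
  · rintro s t he ht τ m h rfl hfr
    exact ext_step13 _ _ _ _ _ _ t h (Or.inl (Or.inr he)) (Or.inr hfr)
      fun τ' m' h' e' _ => ht τ' m' h' e'
end

section
/- Let δe, δb, δr, f be relations on a type α and (ms₁, ms₂) the least pair of subsets of α closed under rules (R1)–(R6). Let δ''p be a relation on α with δ''p ∩ δb = ∅, δ''p ∩ δr = ∅, δ''p ∩ δe = ∅, and f ∩ δe = ∅, and let S'' ⊆ α be such that every p''[]₂δe[]f prefix whose initial state lies in S'' contains no step in δb. Then S'' ∩ ms₂ = ∅. -/
variable {α : Type*}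

def BadFrom (δp δe δb f : Set (α × α)) (σ : ℕ → α) (n : ℕ) : Prop :=
  PrefixF δp δe f σ n ∧ ∃ i < n, (σ i, σ (i + 1)) ∈ δb

def consSeq (s : α) (σ : ℕ → α) : ℕ → α
  | 0 => s
  | n + 1 => σ n

lemma bad_single {δp δe δb f : Set (α × α)} {s t : α} (h : (s, t) ∈ δp ∪ δe ∪ f)
    (hb : (s, t) ∈ δb) : BadFrom δp δe δb f (consSeq s (fun _ => t)) 1 := by
  refine ⟨⟨?_, ?_⟩, 0, by omega, hb⟩
  · intro i hi
    obtain rfl : i = 0 := by omega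
    exact h
  · intro i hi
    omega

lemma bad_cons {δp δe δb f : Set (α × α)} {s : α} {σ : ℕ → α} {n : ℕ}
    (hσ : BadFrom δp δe δb f σ n) (h : (s, σ 0) ∈ δp ∪ δe ∪ f)
    (h2 : (s, σ 0) ∈ δe → (∃ t, (σ 0, t) ∈ δp) → (σ 0, σ 1) ∈ δp ∪ f) :
    BadFrom δp δe δb f (consSeq s σ) (n + 1) := by
  obtain ⟨⟨h3, h4⟩, i, hi, hb⟩ := hσ
  refine ⟨⟨?_, ?_⟩, i + 1, by omega, hb⟩
  · rintro (_ | j) hj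
    · exact h
    · exact h3 j (by omega)
  · rintro (_ | j) hj
    · exact h2
    · exact h4 j (by omega)

theorem stmt14 (δe δb δr f δ''p : Set (α × α)) (ms₁ ms₂ : Set α)
    (hms : LeastMS δe δb δr f ms₁ ms₂)
    (hpb : δ''p ∩ δb = ∅) (hpr : δ''p ∩ δr = ∅)
    (hpe : δ''p ∩ δe = ∅) (hfe : f ∩ δe = ∅)
    (S'' : Set α)
    (hSafe : ∀ (σ : ℕ → α) (n : ℕ), PrefixF δ''p δe f σ n → σ 0 ∈ S'' →
      ∀ i < n, (σ i, σ (i + 1)) ∉ δb) :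
    S'' ∩ ms₂ = ∅ := by
  have key : ClosedMS δe δb δr f
      {s | ∃ σ n, σ 0 = s ∧ BadFrom δ''p δe δb f σ n ∧
        ((∃ t, (σ 0, t) ∈ δ''p) → (σ 0, σ 1) ∈ δ''p ∪ f)}
      {s | ∃ σ n, σ 0 = s ∧ BadFrom δ''p δe δb f σ n} := by
    refine ⟨?_, ?_, ?_, ?_, ?_, ?_⟩
    · intro s t hf hb
      exact ⟨_, _, rfl, bad_single (Or.inr hf) hb, fun _ => Or.inr hf⟩
    · rintro s ⟨σ, n, h0, h, -⟩
      exact ⟨σ, n, h0, h⟩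
    · intro s t he hb
      exact ⟨_, _, rfl, bad_single (Or.inl (Or.inr he)) hb⟩
    · rintro s t hf ⟨σ, n, rfl, h⟩
      refine ⟨_, _, rfl, bad_cons h (Or.inr hf) ?_, fun _ => Or.inr hf⟩
      intro he
      exact absurd (show (s, σ 0) ∈ f ∩ δe from ⟨hf, he⟩) (by simp [hfe])
    · rintro s ⟨t, ht⟩ hu
      by_cases hp : ∃ u, (s, u) ∈ δ''p
      · obtain ⟨u, hp⟩ := hp
        rcases hu u with h | h | ⟨σ, n, rfl, h⟩
        · exact absurd (show (s, u) ∈ δ''p ∩ δb from ⟨hp, h⟩) (by simp [hpb])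
        · exact absurd (show (s, u) ∈ δ''p ∩ δr from ⟨hp, h⟩) (by simp [hpr])
        · refine ⟨_, _, rfl, bad_cons h (Or.inl (Or.inl hp)) ?_, fun _ => Or.inl hp⟩
          intro he
          exact absurd (show (s, σ 0) ∈ δ''p ∩ δe from ⟨hp, he⟩) (by simp [hpe])
      · rcases ht with ⟨he, σ, n, rfl, h, h1⟩ | ⟨he, hb⟩
        · exact ⟨_, _, rfl, bad_cons h (Or.inl (Or.inr he)) (fun _ => h1),
            fun h => absurd h hp⟩
        · exact ⟨_, _, rfl, bad_single (Or.inl (Or.inr he)) hb, fun h => absurd h hp⟩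
    · rintro s t he ⟨σ, n, rfl, h, h1⟩
      exact ⟨_, _, rfl, bad_cons h (Or.inl (Or.inr he)) (fun _ => h1)⟩
  rw [Set.eq_empty_iff_forall_notMem]
  rintro s ⟨hs, hm⟩
  obtain ⟨σ, n, rfl, hpre, i, hi, hb⟩ := (hms.2 _ _ key).2 hm
  exact hSafe σ n hpre hs i hi hb
end

section
/- Let δ'p, δe, δb be relations on a type α and S ⊆ α. Suppose every state of α has some outgoing transition in δ'p ∪ δe, and suppose there exist states s₀, s₁ with (s₀,s₁) ∈ δe and (s₀,s₁) ∈ δb. Then there exists an infinite p'[]₂δe computation σ (with program transitions δ'p) such that σ 0 = s₀ and σ 1 = s₁; consequently p'[]₂δe is not δb-safe stabilizing for invariant S. -/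
variable {α : Type*}

/-- `p[]₂δe` is `δb`-safe stabilizing for invariant `S`. -/
def SafeStab (δp δe δb : Set (α × α)) (S : Set α) : Prop :=
  (∀ s t, s ∈ S → (s, t) ∈ δp ∪ δe → t ∈ S) ∧
  (∀ σ : ℕ → α, Comp2 δp δe σ → ∀ i, (σ i, σ (i + 1)) ∉ δb) ∧
  (∀ σ : ℕ → α, Comp2 δp δe σ → ∃ i, σ i ∈ S)

theorem stmt17 (δ'p δe δb : Set (α × α)) (S : Set α)
    (hNoDeadlock : ∀ s : α, ∃ t, (s, t) ∈ δ'p ∪ δe)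
    (s₀ s₁ : α) (he : (s₀, s₁) ∈ δe) (hbad : (s₀, s₁) ∈ δb) :
    (∃ σ : ℕ → α, Comp2 δ'p δe σ ∧ σ 0 = s₀ ∧ σ 1 = s₁) ∧
    ¬ SafeStab δ'p δe δb S := by
  have h : ∀ s : α, ∃ t, (s, t) ∈ δ'p ∪ δe ∧ ((∃ u, (s, u) ∈ δ'p) → (s, t) ∈ δ'p) := by
    intro s
    by_cases hp : ∃ u, (s, u) ∈ δ'p
    · obtain ⟨u, hu⟩ := hp
      exact ⟨u, Or.inl hu, fun _ => hu⟩
    · obtain ⟨t, ht⟩ := hNoDeadlock s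
      exact ⟨t, ht, fun h => absurd h hp⟩
  choose f hf hfp using h
  have hex : ∃ σ : ℕ → α, Comp2 δ'p δe σ ∧ σ 0 = s₀ ∧ σ 1 = s₁ := by
    have hs : ∀ n, f^[n + 1] s₁ = f (f^[n] s₁) := fun n => Function.iterate_succ_apply' f n s₁
    refine ⟨fun n => Nat.casesOn n s₀ (fun k => f^[k] s₁), ⟨?_, ?_⟩, rfl, rfl⟩
    · intro i
      cases i with
      | zero => exact Or.inr he
      | succ k =>
        change (f^[k] s₁, f^[k + 1] s₁) ∈ δ'p ∪ δe
        rw [hs]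
        exact hf _
    · intro i _ ht
      change (f^[i] s₁, f^[i + 1] s₁) ∈ δ'p
      rw [hs]
      exact hfp _ ht
  refine ⟨hex, fun hS => ?_⟩
  obtain ⟨σ, hσ, h0, h1⟩ := hex
  apply hS.2.1 σ hσ 0
  rw [h0, h1]
  exact hbad
end
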